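/- Let 𝒰 be a finite nonempty set and let Δ(𝒰) denote the set of probability distributions on 𝒰. There exist a probability space (Ω, 𝓕, μ) and a function F : Δ(𝒰) × Ω → 𝒰 such that: (i) for every P ∈ Δ(𝒰), the law of ω ↦ F(P, ω) under μ is exactly P; and (ii) for every 0 ≤ ε < 1 and every P, Q ∈ Δ(𝒰) with total variation distance ∥P − Q∥ ≤ ε, one has μ({ω : F(P, ω) = F(Q, ω)}) ≥ 1 − 2ε. -/

import Mathlib

/-!
Holenstein's rejection sampling. The shared randomness is an i.i.d. sequence of points `(i, t)`
uniform in `Fin n × [0, 1)`, where `n = |𝒰|`. A player holding `P` outputs the first coordinate of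
the first point lying under the graph of `P`.

For an i.i.d. sequence with law `ν` and `B ⊆ A`, the first point in `A` lies in `B` with probability
`ν B / ν A` (a geometric series, `firstHit_measure`). Regions under graphs have measure
`(∑ f) / n` (`base_region`), so the output has law `P`. The two outputs agree as soon as the first
point under the graph of `max P Q` is under the graph of `min P Q`, which has probability
`∑ min P Q / ∑ max P Q = (1 - δ) / (1 + δ) ≥ 1 - 2δ`, where `δ` is the total variation distance.
-/

open Finset MeasureTheory
open scoped Classical

/-- The set of probability distributions on a finite set `𝒰`. -/
def Distr (𝒰 : Type*) [Fintype 𝒰] : Type _ :=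
  {p : 𝒰 → ℝ // (∀ u, 0 ≤ p u) ∧ ∑ u, p u = 1}

/-- Total variation distance. -/
noncomputable def tvDist {𝒰 : Type*} [Fintype 𝒰] (p q : 𝒰 → ℝ) : ℝ :=
  (∑ u, |p u - q u|) / 2

namespace CorrelatedSampling

/-- The sequences whose first point in `A` exists and lies in `B` (for `B ⊆ A`). -/
def firstHit {X : Type*} (A B : Set X) : Set (ℕ → X) :=
  {ω | ∃ k, (∀ i < k, ω i ∉ A) ∧ ω k ∈ B}

lemma firstHit_measure {X : Type*} [MeasurableSpace X] (ν : Measure X) [IsProbabilityMeasure ν]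
    {A B : Set X} (hA : MeasurableSet A) (hB : MeasurableSet B) (hBA : B ⊆ A) :
    Measure.infinitePi (fun _ : ℕ => ν) (firstHit A B) = ν B / ν A := by
  have hbox : ∀ k : ℕ, {ω : ℕ → X | (∀ i < k, ω i ∉ A) ∧ ω k ∈ B}
      = Set.pi (Finset.range (k + 1)) (fun i => if i < k then Aᶜ else B) := by
    intro k
    ext ω
    simp only [Set.mem_ofPred_eq, Set.mem_pi, Finset.coe_range, Set.mem_Iio]
    constructor
    · rintro ⟨h1, h2⟩ i hi
      split_ifs with h
      · exact h1 i h
      · obtain rfl : i = k := by omega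
        exact h2
    · intro h
      refine ⟨fun i hi => ?_, ?_⟩
      · simpa [hi] using h i (by omega)
      · simpa using h k (by omega)
  have hmeas : ∀ i k : ℕ, MeasurableSet (if i < k then Aᶜ else B) := by
    intro i k
    split_ifs
    exacts [hA.compl, hB]
  have hunion : firstHit A B = ⋃ k : ℕ, {ω : ℕ → X | (∀ i < k, ω i ∉ A) ∧ ω k ∈ B} := by
    ext ω
    simp [firstHit]
  rw [hunion, measure_iUnion]
  · have hk : ∀ k : ℕ, Measure.infinitePi (fun _ : ℕ => ν)
        {ω : ℕ → X | (∀ i < k, ω i ∉ A) ∧ ω k ∈ B} = (1 - ν A) ^ k * ν B := by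
      intro k
      rw [hbox, Measure.infinitePi_pi _ (fun i _ => hmeas i k), Finset.prod_range_succ]
      congr 1
      · rw [Finset.prod_congr rfl (g := fun _ => 1 - ν A), Finset.prod_const, Finset.card_range]
        intro i hi
        rw [if_pos (Finset.mem_range.1 hi), prob_compl_eq_one_sub hA]
      · simp
    simp_rw [hk]
    rw [ENNReal.tsum_mul_right, ENNReal.tsum_geometric,
      ENNReal.sub_sub_cancel ENNReal.one_ne_top prob_le_one, mul_comm, div_eq_mul_inv]
  · intro j k hjk
    refine Set.disjoint_left.2 ?_
    rintro ω ⟨h1, h2⟩ ⟨h3, h4⟩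
    rcases lt_or_gt_of_ne hjk with h | h
    · exact h3 j h (hBA h2)
    · exact h1 k h (hBA h4)
  · intro k
    rw [hbox]
    exact MeasurableSet.pi (Set.to_countable _) (fun i _ => hmeas i k)

/-- The uniform distribution on `Fin n × [0, 1)`. -/
noncomputable def base (n : ℕ) : Measure (Fin n × ℝ) :=
  (n : ENNReal)⁻¹ • (Measure.count.prod (volume.restrict (Set.Ico (0 : ℝ) 1)))

/-- The region under the graph of `f`. -/
def region {n : ℕ} (f : Fin n → ℝ) : Set (Fin n × ℝ) := {x | 0 ≤ x.2 ∧ x.2 < f x.1}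

lemma measurableSet_region {n : ℕ} (f : Fin n → ℝ) : MeasurableSet (region f) := by
  have hf : Measurable fun x : Fin n × ℝ => f x.1 :=
    (measurable_of_finite f).comp measurable_fst
  exact (measurableSet_le measurable_const measurable_snd).inter
    (measurableSet_lt measurable_snd hf)

lemma base_region {n : ℕ} (f : Fin n → ℝ) (h0 : ∀ i, 0 ≤ f i) (h1 : ∀ i, f i ≤ 1) :
    base n (region f) = (n : ENNReal)⁻¹ * ENNReal.ofReal (∑ i, f i) := by
  rw [base, Measure.smul_apply, Measure.prod_apply (measurableSet_region f), lintegral_count,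
    tsum_fintype, smul_eq_mul, ENNReal.ofReal_sum_of_nonneg (fun i _ => h0 i)]
  congr 1
  refine Finset.sum_congr rfl fun i _ => ?_
  have hs : Prod.mk i ⁻¹' region f = Set.Ico 0 (f i) := rfl
  rw [hs, Measure.restrict_apply measurableSet_Ico, Set.inter_eq_left.2
    (Set.Ico_subset_Ico_right (h1 i)), Real.volume_Ico, sub_zero]

instance {n : ℕ} [NeZero n] : IsProbabilityMeasure (base n) := by
  constructor
  rw [base, Measure.smul_apply, ← Set.univ_prod_univ, Measure.prod_prod]
  simp [Measure.count_apply, ENNReal.inv_mul_cancel, NeZero.ne n]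

lemma firstHit_region {n : ℕ} [NeZero n] (f g : Fin n → ℝ) (hg0 : ∀ i, 0 ≤ g i)
    (hgf : ∀ i, g i ≤ f i) (hf1 : ∀ i, f i ≤ 1) :
    (Measure.infinitePi (fun _ : ℕ => base n) (firstHit (region f) (region g))).toReal
      = (∑ i, g i) / ∑ i, f i := by
  have hf0 : ∀ i, 0 ≤ f i := fun i => (hg0 i).trans (hgf i)
  rw [firstHit_measure _ (measurableSet_region f) (measurableSet_region g)
      (fun x hx => ⟨hx.1, hx.2.trans_le (hgf _)⟩),
    base_region f hf0 hf1, base_region g hg0 (fun i => (hgf i).trans (hf1 i)),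
    ENNReal.toReal_div, ENNReal.toReal_mul, ENNReal.toReal_mul,
    ENNReal.toReal_ofReal (Finset.sum_nonneg fun i _ => hf0 i),
    ENNReal.toReal_ofReal (Finset.sum_nonneg fun i _ => hg0 i)]
  refine mul_div_mul_left _ _ ?_
  simp [NeZero.ne n]

/-- The label of the first point of `ω` under the graph of `f`; the junk value `0` if there is
no such point. -/
noncomputable def sample {n : ℕ} [NeZero n] (f : Fin n → ℝ) (ω : ℕ → Fin n × ℝ) : Fin n :=
  if h : ∃ k, ω k ∈ region f then (ω (Nat.find h)).1 else 0

lemma sample_eq {n : ℕ} [NeZero n] {f : Fin n → ℝ} {ω : ℕ → Fin n × ℝ} {k : ℕ}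
    (hlt : ∀ i < k, ω i ∉ region f) (hk : ω k ∈ region f) : sample f ω = (ω k).1 := by
  have h : ∃ k, ω k ∈ region f := ⟨k, hk⟩
  rw [sample, dif_pos h, (Nat.find_eq_iff h).2 ⟨hk, hlt⟩]

lemma sample_law {n : ℕ} [NeZero n] (f : Fin n → ℝ) (h0 : ∀ i, 0 ≤ f i) (h1 : ∑ i, f i = 1)
    (j : Fin n) :
    (Measure.infinitePi (fun _ : ℕ => base n) {ω | sample f ω = j}).toReal = f j := by
  have hle : ∀ i, f i ≤ 1 := fun i =>
    h1 ▸ Finset.single_le_sum (fun i _ => h0 i) (Finset.mem_univ i)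
  set μ := Measure.infinitePi (fun _ : ℕ => base n)
  -- Almost surely some point falls under the graph of `f`.
  have hnull : μ (firstHit (region f) (region f))ᶜ = 0 := by
    have hreal := firstHit_region f f h0 (fun _ => le_rfl) hle
    rw [h1, div_one] at hreal
    have hone : μ (firstHit (region f) (region f)) = 1 := by
      rw [← ENNReal.toReal_eq_one_iff]
      exact hreal
    refine (prob_compl_eq_zero_iff₀ ?_).2 hone
    refine MeasurableSet.nullMeasurableSet ?_
    have : firstHit (region f) (region f) = ⋃ k : ℕ,
        ((⋂ i : ℕ, ⋂ _ : i < k, (fun ω : ℕ → Fin n × ℝ => ω i) ⁻¹' (region f)ᶜ)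
          ∩ (fun ω : ℕ → Fin n × ℝ => ω k) ⁻¹' region f) := by
      ext ω
      simp [firstHit]
    rw [this]
    refine MeasurableSet.iUnion fun k => (MeasurableSet.iInter fun i =>
      MeasurableSet.iInter fun _ => ?_).inter ?_
    · exact measurable_pi_apply i (measurableSet_region f).compl
    · exact measurable_pi_apply k (measurableSet_region f)
  let g : Fin n → ℝ := fun i => if i = j then f i else 0
  have hg0 : ∀ i, 0 ≤ g i := fun i => by
    simp only [g]
    split_ifs
    exacts [h0 i, le_rfl]
  have hgf : ∀ i, g i ≤ f i := fun i => by
    simp only [g]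
    split_ifs
    exacts [le_rfl, h0 i]
  have hmem : ∀ x : Fin n × ℝ, x ∈ region g ↔ x ∈ region f ∧ x.1 = j := by
    rintro ⟨i, t⟩
    simp only [region, g, Set.mem_ofPred_eq]
    split_ifs with h
    · simp [h]
    · simp only [h, and_false, iff_false, not_and, not_lt, imp_self]
  have hval := firstHit_region f g hg0 hgf hle
  have hsum : ∑ i, g i = f j := by simp [g]
  rw [hsum, h1, div_one] at hval
  rw [← hval]
  congr 1
  refine le_antisymm ?_ (measure_mono ?_)
  · calc μ {ω | sample f ω = j}
        ≤ μ (firstHit (region f) (region g) ∪ (firstHit (region f) (region f))ᶜ) := by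
          refine measure_mono fun ω hω => ?_
          by_cases hhit : ω ∈ firstHit (region f) (region f)
          · obtain ⟨k, hlt, hk⟩ := hhit
            have hj : sample f ω = j := hω
            exact Or.inl ⟨k, hlt, (hmem _).2 ⟨hk, (sample_eq hlt hk).symm.trans hj⟩⟩
          · exact Or.inr hhit
      _ ≤ _ := measure_union_le _ _
      _ = _ := by rw [hnull, add_zero]
  · rintro ω ⟨k, hlt, hk⟩
    obtain ⟨hk, hj⟩ := (hmem _).1 hk
    exact (sample_eq hlt hk).trans hj

lemma sample_agree {n : ℕ} [NeZero n] (f g : Fin n → ℝ) (hf0 : ∀ i, 0 ≤ f i)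
    (hf1 : ∑ i, f i = 1) (hg0 : ∀ i, 0 ≤ g i) (hg1 : ∑ i, g i = 1) :
    1 - 2 * ((∑ i, |f i - g i|) / 2)
      ≤ (Measure.infinitePi (fun _ : ℕ => base n) {ω | sample f ω = sample g ω}).toReal := by
  have hfle : ∀ i, f i ≤ 1 := fun i =>
    hf1 ▸ Finset.single_le_sum (fun i _ => hf0 i) (Finset.mem_univ i)
  have hgle : ∀ i, g i ≤ 1 := fun i =>
    hg1 ▸ Finset.single_le_sum (fun i _ => hg0 i) (Finset.mem_univ i)
  have hval := firstHit_region (fun i => max (f i) (g i)) (fun i => min (f i) (g i))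
    (fun i => le_min (hf0 i) (hg0 i)) (fun i => min_le_max) (fun i => max_le (hfle i) (hgle i))
  have hsub : firstHit (region fun i => max (f i) (g i)) (region fun i => min (f i) (g i))
      ⊆ {ω | sample f ω = sample g ω} := by
    rintro ω ⟨k, hlt, h0, hk⟩
    obtain ⟨hkf, hkg⟩ := lt_min_iff.1 hk
    have hf : sample f ω = (ω k).1 := sample_eq
      (fun i hi hmem => hlt i hi ⟨hmem.1, lt_max_of_lt_left hmem.2⟩) ⟨h0, hkf⟩
    have hg : sample g ω = (ω k).1 := sample_eq
      (fun i hi hmem => hlt i hi ⟨hmem.1, lt_max_of_lt_right hmem.2⟩) ⟨h0, hkg⟩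
    exact hf.trans hg.symm
  refine le_trans ?_ (ENNReal.toReal_mono (measure_ne_top _ _) (measure_mono hsub))
  rw [hval]
  set δ := (∑ i, |f i - g i|) / 2 with hδ
  have hδ0 : 0 ≤ δ := div_nonneg (Finset.sum_nonneg fun i _ => abs_nonneg _) two_pos.le
  have hmax : ∑ i, max (f i) (g i) = 1 + δ := by
    have hpt : ∀ i, max (f i) (g i) = (f i + g i + |f i - g i|) / 2 := fun i => by
      rcases le_total (f i) (g i) with h | h
      · rw [max_eq_right h, abs_of_nonpos (sub_nonpos.2 h)]
        ring
      · rw [max_eq_left h, abs_of_nonneg (sub_nonneg.2 h)]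
        ring
    simp_rw [hpt, ← Finset.sum_div, Finset.sum_add_distrib, hf1, hg1, hδ]
    ring
  have hmin : ∑ i, min (f i) (g i) = 1 - δ := by
    have : ∑ i, min (f i) (g i) + ∑ i, max (f i) (g i) = 2 := by
      simp_rw [← Finset.sum_add_distrib, min_add_max, Finset.sum_add_distrib, hf1, hg1]
      norm_num
    linarith
  rw [hmax, hmin, le_div_iff₀ (by linarith)]
  nlinarith

end CorrelatedSampling

open CorrelatedSampling in
/-- Classical correlated sampling (Holenstein; the paper's Lemma 2.5).  There is a single
probability space `(Ω, μ)` and a sampling function `F : Δ(𝒰) × Ω → 𝒰` such that `F(P, ·)`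
has law exactly `P` for every `P`, and whenever `∥P - Q∥ ≤ ε < 1` the two samples
`F(P, ω)` and `F(Q, ω)` coincide with probability at least `1 - 2ε`. -/
theorem classical_correlated_sampling (𝒰 : Type*) [Fintype 𝒰] [Nonempty 𝒰] :
    ∃ (Ω : Type) (_ : MeasurableSpace Ω) (μ : Measure Ω),
      IsProbabilityMeasure μ ∧
      ∃ F : Distr 𝒰 × Ω → 𝒰,
        (∀ P : Distr 𝒰, ∀ u : 𝒰, (μ {ω | F (P, ω) = u}).toReal = P.1 u) ∧
        (∀ (ε : ℝ) (P Q : Distr 𝒰), 0 ≤ ε → ε < 1 → tvDist P.1 Q.1 ≤ ε →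
          1 - 2 * ε ≤ (μ {ω | F (P, ω) = F (Q, ω)}).toReal) := by
  have : NeZero (Fintype.card 𝒰) := ⟨Fintype.card_ne_zero⟩
  let e := Fintype.equivFin 𝒰
  have hsum : ∀ h : 𝒰 → ℝ, ∑ i, h (e.symm i) = ∑ u, h u := fun h => Equiv.sum_comp e.symm h
  refine ⟨ℕ → Fin (Fintype.card 𝒰) × ℝ, inferInstance,
    Measure.infinitePi (fun _ : ℕ => base (Fintype.card 𝒰)), inferInstance,
    fun x => e.symm (sample (fun i => x.1.1 (e.symm i)) x.2), ?_, ?_⟩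
  · intro P u
    have h := sample_law (fun i => P.1 (e.symm i)) (fun i => P.2.1 _)
      ((hsum _).trans P.2.2) (e u)
    simpa only [Equiv.symm_apply_eq, Equiv.symm_apply_apply] using h
  · intro ε P Q _ _ hPQ
    have h := sample_agree (fun i => P.1 (e.symm i)) (fun i => Q.1 (e.symm i))
      (fun i => P.2.1 _) ((hsum _).trans P.2.2) (fun i => Q.2.1 _) ((hsum _).trans Q.2.2)
    rw [hsum fun u => |P.1 u - Q.1 u|] at h
    have hPQ' : (∑ u, |P.1 u - Q.1 u|) / 2 ≤ ε := hPQ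
    simp only [e.symm.injective.eq_iff]
    linarith
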